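/- arXiv:2605.16876 — 2 statements merged into one kernel-verified Lean document; each statement's English description precedes it below -/
import Mathlib

section
/- Let ω = (w₁,…,w_m) be a weight vector and let A₁,…,A_m be n×n positive definite complex matrices. If X ∈ Γ(ω; A₁,…,A_m), then 2I − Σᵢ₌₁^m wᵢ Aᵢ⁻¹ ≤ X and 2I − Σᵢ₌₁^m wᵢ Aᵢ ≤ X⁻¹ in the Löwner order; in particular, if 2I − Σᵢ₌₁^m wᵢ Aᵢ is positive definite, then X ≤ (2I − Σᵢ₌₁^m wᵢ Aᵢ)⁻¹. -/
/-!
For positive definite `A`, `X` put `G = A ♯ X⁻¹`. Two scalar inequalities, transported by the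
functional calculus, give `1 - G⁻¹ ≤ log G ≤ G - 1`. The arithmetic-geometric mean inequality
gives `2 G ≤ A + X⁻¹` and, since `G⁻¹ = A⁻¹ ♯ X`, also `2 G⁻¹ ≤ A⁻¹ + X`. Together
`2 - A⁻¹ - X ≤ 2 log G ≤ A + X⁻¹ - 2`; averaging over the weights, where the logarithms sum to
zero, yields both bounds. The last claim follows because inversion reverses the Löwner order
(`posSemidef_inv_sub`).

Both mean inequalities are the same identity: with Hermitian `S`, `R` one has
`S² + S R² S - 2 S R S = ((1 - R) S)ᴴ ((1 - R) S)`, applied to `S = A^{1/2}`,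
`R = (S⁻¹ X⁻¹ S⁻¹)^{1/2}` and to their inverses.
-/

open Matrix
open scoped ComplexOrder

/-- Functional calculus for Hermitian matrices: apply `f` to the eigenvalues. -/
noncomputable def herm {n : ℕ} (f : ℝ → ℝ) (A : Matrix (Fin n) (Fin n) ℂ) :
    Matrix (Fin n) (Fin n) ℂ :=
  if hA : A.IsHermitian then
    (hA.eigenvectorUnitary : Matrix (Fin n) (Fin n) ℂ) *
      Matrix.diagonal (fun i => (f (hA.eigenvalues i) : ℂ)) *
      (star (hA.eigenvectorUnitary : Matrix (Fin n) (Fin n) ℂ))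
  else 0

/-- Square root of a positive definite matrix. -/
noncomputable def msqrt {n : ℕ} (A : Matrix (Fin n) (Fin n) ℂ) : Matrix (Fin n) (Fin n) ℂ :=
  herm Real.sqrt A

/-- Logarithm of a positive definite matrix. -/
noncomputable def mlog {n : ℕ} (A : Matrix (Fin n) (Fin n) ℂ) : Matrix (Fin n) (Fin n) ℂ :=
  herm Real.log A

/-- Real power of a positive definite matrix. -/
noncomputable def mpow {n : ℕ} (A : Matrix (Fin n) (Fin n) ℂ) (t : ℝ) :
    Matrix (Fin n) (Fin n) ℂ :=
  herm (fun x => x ^ t) A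

/-- Metric geometric mean `A ♯ B = A^{1/2} (A^{-1/2} B A^{-1/2})^{1/2} A^{1/2}`. -/
noncomputable def geom {n : ℕ} (A B : Matrix (Fin n) (Fin n) ℂ) : Matrix (Fin n) (Fin n) ℂ :=
  msqrt A * msqrt ((msqrt A)⁻¹ * B * (msqrt A)⁻¹) * msqrt A

/-- The solution set `Γ(ω; A₁,…,A_m)` of the spectral-geometric-mean equation
`∑ᵢ wᵢ log(Aᵢ ♯ X⁻¹) = 0` among positive definite matrices. -/
noncomputable def Gamma {m n : ℕ} (w : Fin m → ℝ) (A : Fin m → Matrix (Fin n) (Fin n) ℂ) :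
    Set (Matrix (Fin n) (Fin n) ℂ) :=
  {X | X.PosDef ∧ ∑ i, w i • mlog (geom (A i) X⁻¹) = 0}

lemma herm_eq {n : ℕ} (f : ℝ → ℝ) {A : Matrix (Fin n) (Fin n) ℂ} (hA : A.IsHermitian) :
    herm f A = (hA.eigenvectorUnitary : Matrix (Fin n) (Fin n) ℂ) *
      Matrix.diagonal (fun i => (f (hA.eigenvalues i) : ℂ)) *
      (star (hA.eigenvectorUnitary : Matrix (Fin n) (Fin n) ℂ)) := by
  simp [herm, hA]

lemma herm_id {n : ℕ} {A : Matrix (Fin n) (Fin n) ℂ} (hA : A.IsHermitian) :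
    herm (fun x => x) A = A := by
  rw [herm_eq _ hA]
  conv_rhs => rw [hA.spectral_theorem]
  rfl

lemma herm_one {n : ℕ} {A : Matrix (Fin n) (Fin n) ℂ} (hA : A.IsHermitian) :
    herm (fun _ => 1) A = 1 := by
  rw [herm_eq _ hA]
  simp

lemma herm_sub {n : ℕ} (f g : ℝ → ℝ) {A : Matrix (Fin n) (Fin n) ℂ} (hA : A.IsHermitian) :
    herm (fun x => f x - g x) A = herm f A - herm g A := by
  rw [herm_eq _ hA, herm_eq _ hA, herm_eq _ hA, ← sub_mul, ← mul_sub, diagonal_sub]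
  simp

lemma herm_mul {n : ℕ} (f g : ℝ → ℝ) {A : Matrix (Fin n) (Fin n) ℂ} (hA : A.IsHermitian) :
    herm (fun x => f x * g x) A = herm f A * herm g A := by
  rw [herm_eq _ hA, herm_eq _ hA, herm_eq _ hA]
  have h : star (hA.eigenvectorUnitary : Matrix (Fin n) (Fin n) ℂ) *
      (hA.eigenvectorUnitary : Matrix (Fin n) (Fin n) ℂ) = 1 := by simp
  simp only [mul_assoc]
  rw [← mul_assoc (star _) (hA.eigenvectorUnitary : Matrix (Fin n) (Fin n) ℂ), h, one_mul,
    ← mul_assoc (diagonal _) (diagonal _), diagonal_mul_diagonal]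
  simp

lemma herm_congr {n : ℕ} {f g : ℝ → ℝ} {A : Matrix (Fin n) (Fin n) ℂ} (hA : A.PosDef)
    (h : ∀ x, 0 < x → f x = g x) : herm f A = herm g A := by
  rw [herm_eq _ hA.1, herm_eq _ hA.1]
  have : ∀ i, f (hA.1.eigenvalues i) = g (hA.1.eigenvalues i) :=
    fun i => h _ (hA.eigenvalues_pos i)
  simp [this]

lemma herm_posSemidef {n : ℕ} {f : ℝ → ℝ} {A : Matrix (Fin n) (Fin n) ℂ} (hA : A.PosDef)
    (h : ∀ x, 0 < x → 0 ≤ f x) : (herm f A).PosSemidef := by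
  rw [herm_eq _ hA.1]
  refine PosSemidef.mul_mul_conjTranspose_same (PosSemidef.diagonal fun i => ?_) _
  simpa using h _ (hA.eigenvalues_pos i)

lemma herm_inv {n : ℕ} {A : Matrix (Fin n) (Fin n) ℂ} (hA : A.PosDef) :
    herm (fun x => x⁻¹) A = A⁻¹ := by
  symm
  apply inv_eq_right_inv
  conv_lhs => arg 1; rw [← herm_id hA.1]
  rw [← herm_mul _ _ hA.1, herm_congr hA (g := fun _ => 1) (fun x hx => mul_inv_cancel₀ hx.ne'),
    herm_one hA.1]

lemma msqrt_mul_self {n : ℕ} {A : Matrix (Fin n) (Fin n) ℂ} (hA : A.PosDef) :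
    msqrt A * msqrt A = A := by
  rw [msqrt, ← herm_mul _ _ hA.1,
    herm_congr hA (g := fun x => x) (fun x hx => Real.mul_self_sqrt hx.le), herm_id hA.1]

lemma msqrt_posDef {n : ℕ} {A : Matrix (Fin n) (Fin n) ℂ} (hA : A.PosDef) :
    (msqrt A).PosDef := by
  have hu : IsUnit (msqrt A) := by
    have h := hA.isUnit
    rw [← msqrt_mul_self hA] at h
    exact (IsUnit.mul_iff.mp h).1
  exact (herm_posSemidef hA fun x _ => Real.sqrt_nonneg x).posDef_iff_isUnit.mpr hu

lemma mlog_le {n : ℕ} {G : Matrix (Fin n) (Fin n) ℂ} (hG : G.PosDef) :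
    (G - 1 - mlog G).PosSemidef := by
  have h : (herm (fun x => x - 1 - Real.log x) G).PosSemidef :=
    herm_posSemidef hG fun x hx => by linarith [Real.log_le_sub_one_of_pos hx]
  rwa [herm_sub (fun x => x - 1) _ hG.1, herm_sub (fun x => x) _ hG.1, herm_id hG.1,
    herm_one hG.1] at h

lemma le_mlog {n : ℕ} {G : Matrix (Fin n) (Fin n) ℂ} (hG : G.PosDef) :
    (mlog G - (1 - G⁻¹)).PosSemidef := by
  have h : (herm (fun x => Real.log x - (1 - x⁻¹)) G).PosSemidef :=
    herm_posSemidef hG fun x hx => by linarith [Real.one_sub_inv_le_log_of_pos hx]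
  rwa [herm_sub _ (fun x => 1 - x⁻¹) hG.1, herm_sub _ (fun x => x⁻¹) hG.1, herm_inv hG,
    herm_one hG.1] at h

/-- The identity `S² + S R² S - 2 S R S = ((1 - R) S)ᴴ ((1 - R) S)` behind the
arithmetic-geometric mean inequality. -/
lemma amgm {n : ℕ} {S R : Matrix (Fin n) (Fin n) ℂ} (hS : S.IsHermitian) (hR : R.IsHermitian) :
    (S * S + S * (R * R) * S - 2 * (S * R * S)).PosSemidef := by
  have h := posSemidef_conjTranspose_mul_self ((1 - R) * S)
  rw [conjTranspose_mul, conjTranspose_sub, hS.eq, hR.eq, conjTranspose_one] at h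
  convert h using 1
  noncomm_ring

/-- The two-sided bound `2 - A⁻¹ - X ≤ 2 log (A ♯ X⁻¹) ≤ A + X⁻¹ - 2`. -/
lemma two_mlog_geom_bounds {n : ℕ} {A X : Matrix (Fin n) (Fin n) ℂ} (hA : A.PosDef)
    (hX : X.PosDef) :
    (A⁻¹ + X - 2 + 2 * mlog (geom A X⁻¹)).PosSemidef ∧
    (A + X⁻¹ - 2 - 2 * mlog (geom A X⁻¹)).PosSemidef := by
  have hS := msqrt_posDef hA
  have hSS := msqrt_mul_self hA
  have hG : geom A X⁻¹ = msqrt A * msqrt ((msqrt A)⁻¹ * X⁻¹ * (msqrt A)⁻¹) * msqrt A := rfl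
  set S := msqrt A
  have hSdet : IsUnit S.det := (isUnit_iff_isUnit_det S).mp hS.isUnit
  have hT : (S⁻¹ * X⁻¹ * S⁻¹).PosDef := by
    have h := hX.inv.conjTranspose_mul_mul_same (B := S⁻¹)
      (mulVec_injective_of_isUnit hS.inv.isUnit)
    rwa [hS.inv.1.eq] at h
  have hR := msqrt_posDef hT
  have hRR := msqrt_mul_self hT
  set R := msqrt (S⁻¹ * X⁻¹ * S⁻¹)
  have hGp : (geom A X⁻¹).PosDef := by
    have h := hR.conjTranspose_mul_mul_same (B := S) (mulVec_injective_of_isUnit hS.isUnit)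
    rwa [hS.1.eq, ← hG] at h
  have hB : S * (R * R) * S = X⁻¹ := by
    rw [hRR, mul_assoc S⁻¹, mul_nonsing_inv_cancel_left _ _ hSdet,
      nonsing_inv_mul_cancel_right _ _ hSdet]
  have hGi : (geom A X⁻¹)⁻¹ = S⁻¹ * R⁻¹ * S⁻¹ := by
    rw [hG, Matrix.mul_inv_rev, Matrix.mul_inv_rev, mul_assoc]
  have hBi : S⁻¹ * (R⁻¹ * R⁻¹) * S⁻¹ = X := by
    rw [← nonsing_inv_nonsing_inv X ((isUnit_iff_isUnit_det X).mp hX.isUnit), ← hB,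
      Matrix.mul_inv_rev, Matrix.mul_inv_rev, Matrix.mul_inv_rev, mul_assoc]
  have h1 := amgm hS.1 hR.1
  have h2 := amgm hS.inv.1 hR.inv.1
  rw [hSS, hB, ← hG] at h1
  rw [hBi, ← Matrix.mul_inv_rev, hSS, ← hGi] at h2
  have l1 := mlog_le hGp
  have l2 := le_mlog hGp
  constructor
  · convert (h2.add l2).add l2 using 1
    rw [← one_add_one_eq_two]
    simp only [add_mul, one_mul]
    abel
  · convert (h1.add l1).add l1 using 1
    rw [← one_add_one_eq_two]
    simp only [add_mul, one_mul]
    abel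

/-- Both Schur complements of the block matrix `[X⁻¹, 1; 1, M⁻¹]`. -/
lemma posSemidef_inv_sub {n : ℕ} {M X : Matrix (Fin n) (Fin n) ℂ} (hM : M.PosDef)
    (hX : X.PosDef) (h : (X⁻¹ - M).PosSemidef) : (M⁻¹ - X).PosSemidef := by
  have := hX.inv.isUnit.invertible
  have := hM.inv.isUnit.invertible
  have h1 := PosDef.fromBlocks₁₁ (1 : Matrix (Fin n) (Fin n) ℂ) M⁻¹ hX.inv
  have h2 := PosDef.fromBlocks₂₂ X⁻¹ (1 : Matrix (Fin n) (Fin n) ℂ) hM.inv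
  rw [nonsing_inv_nonsing_inv _ ((isUnit_iff_isUnit_det X).mp hX.isUnit)] at h1
  rw [nonsing_inv_nonsing_inv _ ((isUnit_iff_isUnit_det M).mp hM.isUnit)] at h2
  simp only [conjTranspose_one, one_mul, mul_one] at h1 h2
  exact h1.mp (h2.mpr h)

theorem stmt9 {m n : ℕ} (w : Fin m → ℝ) (hw : ∀ i, 0 < w i) (hw1 : ∑ i, w i = 1)
    (A : Fin m → Matrix (Fin n) (Fin n) ℂ) (hA : ∀ i, (A i).PosDef) :
    ∀ X ∈ Gamma w A,
      (X - ((2 : ℝ) • (1 : Matrix (Fin n) (Fin n) ℂ) - ∑ i, w i • (A i)⁻¹)).PosSemidef ∧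
      (X⁻¹ - ((2 : ℝ) • (1 : Matrix (Fin n) (Fin n) ℂ) - ∑ i, w i • A i)).PosSemidef ∧
      (((2 : ℝ) • (1 : Matrix (Fin n) (Fin n) ℂ) - ∑ i, w i • A i).PosDef →
        (((2 : ℝ) • (1 : Matrix (Fin n) (Fin n) ℂ) - ∑ i, w i • A i)⁻¹ - X).PosSemidef) := by
  intro X hX
  obtain ⟨hXp, hsum⟩ := hX
  have hsum2 : ∑ i, w i • (2 * mlog (geom (A i) X⁻¹)) = 0 := by
    simp only [← mul_smul_comm, ← Finset.mul_sum, hsum, mul_zero]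
  have h2 : (2 : ℝ) • (1 : Matrix (Fin n) (Fin n) ℂ) = 2 := by
    rw [two_smul, one_add_one_eq_two]
  have hlow : (X - ((2 : ℝ) • (1 : Matrix (Fin n) (Fin n) ℂ) -
      ∑ i, w i • (A i)⁻¹)).PosSemidef := by
    have h := posSemidef_sum Finset.univ fun i _ =>
      (two_mlog_geom_bounds (hA i) hXp).1.smul (hw i).le
    simp only [smul_add, smul_sub, Finset.sum_add_distrib, Finset.sum_sub_distrib, hsum2,
      ← Finset.sum_smul, hw1, one_smul, add_zero] at h
    rw [h2]
    convert h using 1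
    abel
  have hupp : (X⁻¹ - ((2 : ℝ) • (1 : Matrix (Fin n) (Fin n) ℂ) -
      ∑ i, w i • A i)).PosSemidef := by
    have h := posSemidef_sum Finset.univ fun i _ =>
      (two_mlog_geom_bounds (hA i) hXp).2.smul (hw i).le
    simp only [smul_add, smul_sub, Finset.sum_add_distrib, Finset.sum_sub_distrib, hsum2,
      ← Finset.sum_smul, hw1, one_smul, sub_zero] at h
    rw [h2]
    convert h using 1
    abel
  exact ⟨hlow, hupp, fun hM => posSemidef_inv_sub hM hXp hupp⟩
end

section
/- Let ω = (w₁,…,w_m) be a weight vector and let A₁,…,A_m be n×n positive definite complex matrices. Then every X ∈ Γ(ω; A₁,…,A_m) satisfies the near-order bounds (Σ_{j=1}^m w_j A_j⁻¹) ♯ X ≥ I and X⁻¹ ♯ (Σ_{j=1}^m w_j A_j) ≥ I in the Löwner order; that is, the weighted harmonic mean (Σ_j w_j A_j⁻¹)⁻¹ ⪯ X ⪯ Σ_j w_j A_j in the near order, where A ⪯ B means A⁻¹ ♯ B ≥ I. -/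
/-!
Put `Cᵢ = Aᵢ ♯ X⁻¹`. A geometric mean `G = A ♯ B` is a positive definite solution of the Riccati
equation `G A⁻¹ G = B`, hence `Aᵢ = Cᵢ X Cᵢ`, and `G = X⁻¹ ♯ ∑ wᵢ Aᵢ` satisfies
`G X G = ∑ wᵢ Cᵢ X Cᵢ`. With `Q = X^{1/2}` this reads `(Q G Q)² = ∑ wᵢ (Q Cᵢ Q)²`, which dominates
`(Q (∑ wᵢ Cᵢ) Q)²` by operator convexity of the square. Since the square root is operator monotone,
`Q G Q ≥ Q (∑ wᵢ Cᵢ) Q`, that is `G ≥ ∑ wᵢ Cᵢ`. Finally `Cᵢ ≥ I + log Cᵢ` and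
`∑ wᵢ log Cᵢ = 0` give `G ≥ I`.

The lower bound is the same argument (`one_le_of_riccati`) applied to `X⁻¹`, `Cᵢ⁻¹` and `-log Cᵢ`,
because `Aᵢ⁻¹ = Cᵢ⁻¹ X⁻¹ Cᵢ⁻¹`.
-/


open Matrix
open scoped ComplexOrder

section Herm

variable {n : ℕ} {C : Matrix (Fin n) (Fin n) ℂ}

lemma herm_of_isHermitian (hC : C.IsHermitian) (f : ℝ → ℝ) :
    herm f C = (hC.eigenvectorUnitary : Matrix (Fin n) (Fin n) ℂ) *
      Matrix.diagonal (fun i => (f (hC.eigenvalues i) : ℂ)) *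
      (hC.eigenvectorUnitary : Matrix (Fin n) (Fin n) ℂ)ᴴ := by
  rw [herm, dif_pos hC]; rfl

lemma herm_id_s13 (hC : C.IsHermitian) : herm (fun x => x) C = C := by
  rw [herm_of_isHermitian hC]
  conv_rhs => rw [hC.spectral_theorem, Unitary.conjStarAlgAut_apply]
  rfl

lemma herm_one_s13 (hC : C.IsHermitian) : herm (fun _ => 1) C = 1 := by
  rw [herm_of_isHermitian hC]
  have h : (hC.eigenvectorUnitary : Matrix (Fin n) (Fin n) ℂ) *
      (hC.eigenvectorUnitary : Matrix (Fin n) (Fin n) ℂ)ᴴ = 1 :=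
    Unitary.coe_mul_star_self hC.eigenvectorUnitary
  simpa using h

lemma herm_mul_s13 (hC : C.IsHermitian) (f g : ℝ → ℝ) :
    herm f C * herm g C = herm (fun x => f x * g x) C := by
  simp only [herm_of_isHermitian hC]
  have h : (hC.eigenvectorUnitary : Matrix (Fin n) (Fin n) ℂ)ᴴ *
      (hC.eigenvectorUnitary : Matrix (Fin n) (Fin n) ℂ) = 1 :=
    Unitary.coe_star_mul_self hC.eigenvectorUnitary
  generalize (hC.eigenvectorUnitary : Matrix (Fin n) (Fin n) ℂ) = U at h
  simp only [Complex.ofReal_mul, ← Matrix.diagonal_mul_diagonal, Matrix.mul_assoc]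
  rw [← Matrix.mul_assoc Uᴴ U, h, Matrix.one_mul]

lemma herm_sub_s13 (hC : C.IsHermitian) (f g : ℝ → ℝ) :
    herm f C - herm g C = herm (fun x => f x - g x) C := by
  simp only [herm_of_isHermitian hC, Complex.ofReal_sub, ← Matrix.diagonal_sub, Matrix.mul_sub,
    Matrix.sub_mul]

lemma herm_congr_s13 (hC : C.IsHermitian) {f g : ℝ → ℝ}
    (h : ∀ i, f (hC.eigenvalues i) = g (hC.eigenvalues i)) : herm f C = herm g C := by
  simp only [herm_of_isHermitian hC, h]

lemma herm_posSemidef_s13 (hC : C.IsHermitian) {f : ℝ → ℝ}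
    (h : ∀ i, 0 ≤ f (hC.eigenvalues i)) : (herm f C).PosSemidef := by
  rw [herm_of_isHermitian hC]
  exact (PosSemidef.diagonal fun i => by simpa using h i).mul_mul_conjTranspose_same _

lemma herm_inv_s13 (hC : C.PosDef) : herm (fun x => x⁻¹) C = C⁻¹ := by
  refine (Matrix.inv_eq_right_inv ?_).symm
  nth_rw 1 [← herm_id_s13 hC.1]
  rw [herm_mul_s13 hC.1, ← herm_one_s13 hC.1]
  exact herm_congr_s13 hC.1 fun i => mul_inv_cancel₀ (hC.eigenvalues_pos i).ne'

/-- `C ≥ I + log C`. -/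
lemma posSemidef_sub_one_sub_mlog (hC : C.PosDef) : (C - 1 - mlog C).PosSemidef := by
  have h : C - 1 - mlog C = herm (fun x => x - 1 - Real.log x) C := by
    rw [← herm_sub_s13 hC.1, ← herm_sub_s13 hC.1, herm_id_s13 hC.1, herm_one_s13 hC.1, mlog]
  rw [h]
  refine herm_posSemidef_s13 hC.1 fun i => ?_
  have := Real.log_le_sub_one_of_pos (hC.eigenvalues_pos i)
  linarith

/-- `C⁻¹ ≥ I - log C`. -/
lemma posSemidef_inv_sub_one_sub_neg_mlog (hC : C.PosDef) :
    (C⁻¹ - 1 - -mlog C).PosSemidef := by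
  have h : C⁻¹ - 1 - -mlog C = herm (fun x => x⁻¹ - 1 - (0 - Real.log x)) C := by
    rw [← herm_sub_s13 hC.1, ← herm_sub_s13 hC.1, ← herm_sub_s13 hC.1, herm_inv_s13 hC, herm_one_s13 hC.1, mlog]
    have h0 : herm (fun _ => 0) C = 0 := by simp [herm_of_isHermitian hC.1]
    rw [h0, zero_sub]
  rw [h]
  refine herm_posSemidef_s13 hC.1 fun i => ?_
  have := Real.log_le_sub_one_of_pos (inv_pos.2 (hC.eigenvalues_pos i))
  rw [Real.log_inv] at this
  linarith

lemma msqrt_mul_self_s13 (hC : C.PosSemidef) : msqrt C * msqrt C = C := by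
  rw [msqrt, herm_mul_s13 hC.1]
  conv_rhs => rw [← herm_id_s13 hC.1]
  exact herm_congr_s13 hC.1 fun i => Real.mul_self_sqrt (hC.eigenvalues_nonneg i)

lemma msqrt_posSemidef (hC : C.PosSemidef) : (msqrt C).PosSemidef :=
  herm_posSemidef_s13 hC.1 fun _ => Real.sqrt_nonneg _

lemma msqrt_posDef_s13 (hC : C.PosDef) : (msqrt C).PosDef := by
  rw [(msqrt_posSemidef hC.posSemidef).posDef_iff_isUnit]
  refine isUnit_of_mul_isUnit_left (y := msqrt C) ?_
  rw [msqrt_mul_self_s13 hC.posSemidef]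
  exact hC.isUnit

end Herm

section Geom

variable {n : ℕ} {A B : Matrix (Fin n) (Fin n) ℂ}

lemma posDef_conj_of_posDef {R D : Matrix (Fin n) (Fin n) ℂ} (hR : R.PosDef) (hD : D.PosDef) :
    (R * D * R).PosDef := by
  have := hD.mul_mul_conjTranspose_same (B := R)
    (Matrix.vecMul_injective_of_isUnit hR.isUnit)
  rwa [hR.1.eq] at this

lemma geom_posDef (hA : A.PosDef) (hB : B.PosDef) : (geom A B).PosDef :=
  posDef_conj_of_posDef (msqrt_posDef_s13 hA)
    (msqrt_posDef_s13 (posDef_conj_of_posDef (msqrt_posDef_s13 hA).inv hB))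

/-- The Riccati equation characterising `A ♯ B`. -/
lemma geom_mul_inv_mul_geom (hA : A.PosDef) (hB : B.PosDef) :
    geom A B * A⁻¹ * geom A B = B := by
  have hR := msqrt_posDef_s13 hA
  have hS := msqrt_mul_self_s13 (posDef_conj_of_posDef hR.inv hB).posSemidef
  have hRR := msqrt_mul_self_s13 hA.posSemidef
  have hdet := (Matrix.isUnit_iff_isUnit_det _).1 hR.isUnit
  have hAinv : A⁻¹ = (msqrt A)⁻¹ * (msqrt A)⁻¹ := by
    rw [← Matrix.mul_inv_rev, hRR]
  rw [geom, hAinv]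
  generalize msqrt A = R at *
  generalize msqrt (R⁻¹ * B * R⁻¹) = S at *
  calc R * S * R * (R⁻¹ * R⁻¹) * (R * S * R)
      = R * S * (R * R⁻¹) * (R⁻¹ * R) * S * R := by simp only [Matrix.mul_assoc]
    _ = R * (S * S) * R := by
        rw [Matrix.mul_nonsing_inv _ hdet, Matrix.nonsing_inv_mul _ hdet]
        simp only [Matrix.mul_assoc, Matrix.one_mul]
    _ = (R * R⁻¹) * B * (R⁻¹ * R) := by rw [hS]; simp only [Matrix.mul_assoc]
    _ = B := by
        rw [Matrix.mul_nonsing_inv _ hdet, Matrix.nonsing_inv_mul _ hdet, Matrix.one_mul,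
          Matrix.mul_one]

/-- The Riccati equation is symmetric in the two arguments of the mean. -/
lemma geom_mul_inv_mul_geom' (hA : A.PosDef) (hB : B.PosDef) :
    geom A B * B⁻¹ * geom A B = A := by
  have h := geom_mul_inv_mul_geom hA hB
  have hdet := (Matrix.isUnit_iff_isUnit_det _).1 (geom_posDef hA hB).isUnit
  have hAA := Matrix.nonsing_inv_nonsing_inv A ((Matrix.isUnit_iff_isUnit_det _).1 hA.isUnit)
  generalize geom A B = G at *
  rw [← h, Matrix.mul_inv_rev, Matrix.mul_inv_rev, hAA]
  calc G * (G⁻¹ * (A * G⁻¹)) * G = (G * G⁻¹) * A * (G⁻¹ * G) := by simp only [Matrix.mul_assoc]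
    _ = A := by
        rw [Matrix.mul_nonsing_inv _ hdet, Matrix.nonsing_inv_mul _ hdet, Matrix.one_mul,
          Matrix.mul_one]

end Geom

open scoped MatrixOrder Matrix.Norms.L2Operator in
/-- Operator monotonicity of the square root. -/
lemma posSemidef_sub_of_sq {n : ℕ} {S T : Matrix (Fin n) (Fin n) ℂ} (hS : S.PosSemidef)
    (hT : T.PosSemidef) (h : (T * T - S * S).PosSemidef) : (T - S).PosSemidef := by
  rw [← Matrix.le_iff] at h ⊢
  have := CFC.sqrt_le_sqrt _ _ h
  rwa [CFC.sqrt_mul_self S (Matrix.nonneg_iff_posSemidef.2 hS),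
    CFC.sqrt_mul_self T (Matrix.nonneg_iff_posSemidef.2 hT)] at this

lemma posSemidef_sum_smul {m n : ℕ} {w : Fin m → ℝ} (hw : ∀ i, 0 < w i)
    {D : Fin m → Matrix (Fin n) (Fin n) ℂ} (hD : ∀ i, (D i).PosSemidef) :
    (∑ i, w i • D i).PosSemidef :=
  posSemidef_sum _ fun i _ => (hD i).smul (hw i).le

/-- A weighted sum with positive weights of total mass one has at least one term, so it stays
positive definite. -/
lemma posDef_sum_smul {m n : ℕ} {w : Fin m → ℝ} (hw : ∀ i, 0 < w i) (hw1 : ∑ i, w i = 1)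
    {D : Fin m → Matrix (Fin n) (Fin n) ℂ} (hD : ∀ i, (D i).PosDef) :
    (∑ i, w i • D i).PosDef := by
  refine posDef_sum ?_ fun i _ => (hD i).smul (hw i)
  by_contra h
  simp [Finset.not_nonempty_iff_eq_empty.1 h] at hw1

/-- Operator convexity of the square: the gap is the variance `∑ wᵢ (Sᵢ - S)²`. -/
lemma posSemidef_variance {m n : ℕ} {w : Fin m → ℝ} (hw : ∀ i, 0 < w i) (hw1 : ∑ i, w i = 1)
    {S : Fin m → Matrix (Fin n) (Fin n) ℂ} (hS : ∀ i, (S i).IsHermitian) :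
    (∑ i, w i • (S i * S i) - (∑ i, w i • S i) * (∑ i, w i • S i)).PosSemidef := by
  set M := ∑ i, w i • S i with hM
  have hMh : M.IsHermitian := by
    rw [hM, IsHermitian, conjTranspose_sum]
    exact Finset.sum_congr rfl fun i _ => by rw [conjTranspose_smul, (hS i).eq, star_trivial]
  have h : ∑ i, w i • (S i * S i) - M * M = ∑ i, w i • ((S i - M) * (S i - M)) := by
    have e : ∀ i, w i • ((S i - M) * (S i - M)) =
        w i • (S i * S i) - (w i • S i) * M - M * (w i • S i) + w i • (M * M) := by
      intro i
      rw [Matrix.smul_mul, Matrix.mul_smul, sub_mul, mul_sub, mul_sub]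
      module
    simp only [e, Finset.sum_add_distrib, Finset.sum_sub_distrib]
    rw [← Finset.sum_mul, ← Finset.mul_sum, ← Finset.sum_smul, hw1, ← hM, one_smul]
    abel
  rw [h]
  refine posSemidef_sum_smul hw fun i => ?_
  have := posSemidef_conjTranspose_mul_self (S i - M)
  rwa [conjTranspose_sub, (hS i).eq, hMh.eq] at this

/-- If `G P G = ∑ wᵢ Cᵢ P Cᵢ`, where `Cᵢ ≥ I + Hᵢ` and `∑ wᵢ Hᵢ = 0`, then `G ≥ I`. -/
lemma one_le_of_riccati {m n : ℕ} {w : Fin m → ℝ} (hw : ∀ i, 0 < w i) (hw1 : ∑ i, w i = 1)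
    {P G : Matrix (Fin n) (Fin n) ℂ} {C H : Fin m → Matrix (Fin n) (Fin n) ℂ}
    (hP : P.PosDef) (hG : G.PosDef) (hC : ∀ i, (C i).PosDef)
    (hH : ∑ i, w i • H i = 0) (hCH : ∀ i, (C i - 1 - H i).PosSemidef)
    (hR : G * P * G = ∑ i, w i • (C i * P * C i)) : (G - 1).PosSemidef := by
  have hQ := msqrt_posDef_s13 hP
  have hQQ := msqrt_mul_self_s13 hP.posSemidef
  generalize msqrt P = Q at hQ hQQ
  subst hQQ
  set M := ∑ i, w i • C i with hM
  have hQM : Q * M * Q = ∑ i, w i • (Q * C i * Q) := by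
    simp only [hM, Finset.mul_sum, Finset.sum_mul, Matrix.mul_smul, Matrix.smul_mul]
  have hsq : (Q * G * Q) * (Q * G * Q) = ∑ i, w i • ((Q * C i * Q) * (Q * C i * Q)) := by
    calc (Q * G * Q) * (Q * G * Q) = Q * (G * (Q * Q) * G) * Q := by
          simp only [Matrix.mul_assoc]
      _ = _ := by
          rw [hR]
          simp only [Finset.mul_sum, Finset.sum_mul, Matrix.mul_smul, Matrix.smul_mul,
            Matrix.mul_assoc]
  have hMpd : M.PosDef := posDef_sum_smul hw hw1 hC
  have hvar := posSemidef_variance hw hw1 (S := fun i => Q * C i * Q)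
    fun i => (posDef_conj_of_posDef hQ (hC i)).1
  rw [← hsq, ← hQM] at hvar
  have hle := posSemidef_sub_of_sq (posDef_conj_of_posDef hQ hMpd).posSemidef
    (posDef_conj_of_posDef hQ hG).posSemidef hvar
  have hGM : (G - M).PosSemidef := by
    rw [← IsUnit.posSemidef_star_right_conjugate_iff hQ.isUnit, Matrix.star_eq_conjTranspose,
      hQ.1.eq, Matrix.mul_sub, Matrix.sub_mul]
    exact hle
  have hM1 : (M - 1).PosSemidef := by
    have e : M - 1 = ∑ i, w i • (C i - 1 - H i) := by
      simp only [smul_sub, Finset.sum_sub_distrib]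
      rw [hH, ← Finset.sum_smul, hw1, one_smul, sub_zero]
    rw [e]
    exact posSemidef_sum_smul hw hCH
  simpa using hGM.add hM1

theorem stmt13 {m n : ℕ} (w : Fin m → ℝ) (hw : ∀ i, 0 < w i) (hw1 : ∑ i, w i = 1)
    (A : Fin m → Matrix (Fin n) (Fin n) ℂ) (hA : ∀ i, (A i).PosDef) :
    ∀ X ∈ Gamma w A,
      (geom (∑ j, w j • (A j)⁻¹) X - 1).PosSemidef ∧
      (geom X⁻¹ (∑ j, w j • A j) - 1).PosSemidef := by
  rintro X ⟨hX, hlog⟩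
  have hXX := Matrix.nonsing_inv_nonsing_inv X ((Matrix.isUnit_iff_isUnit_det _).1 hX.isUnit)
  have hC := fun i => geom_posDef (hA i) hX.inv
  have hAC : ∀ i, geom (A i) X⁻¹ * X * geom (A i) X⁻¹ = A i := fun i => by
    have := geom_mul_inv_mul_geom' (hA i) hX.inv
    rwa [hXX] at this
  constructor
  · have hD := posDef_sum_smul hw hw1 fun i => (hA i).inv
    refine one_le_of_riccati hw hw1 hX.inv (geom_posDef hD hX) (fun i => (hC i).inv)
      (H := fun i => -mlog (geom (A i) X⁻¹)) (by simp [hlog])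
      (fun i => posSemidef_inv_sub_one_sub_neg_mlog (hC i)) ?_
    rw [geom_mul_inv_mul_geom' hD hX]
    refine Finset.sum_congr rfl fun i _ => ?_
    conv_lhs => rw [← hAC i]
    simp only [Matrix.mul_inv_rev, Matrix.mul_assoc]
  · have hD := posDef_sum_smul hw hw1 hA
    refine one_le_of_riccati hw hw1 hX (geom_posDef hX.inv hD) hC hlog
      (fun i => posSemidef_sub_one_sub_mlog (hC i)) ?_
    have := geom_mul_inv_mul_geom hX.inv hD
    rw [hXX] at this
    simpa only [hAC] using this
end
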